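/- Fix n ≥ 3, a subgroup H ≤ S_n such that C acts freely on X = S_n/H by left multiplication, and an integer m ≥ 2 with n not divisible by m. Let ζ be a primitive m-th root of unity, k = ⌊(n−1)/m⌋, and Y(q) = X(q)/[n]_q where X(q) = ℋ(ℂ[x_1,…,x_n]^H;q)/ℋ(ℂ[x_1,…,x_n]^{S_n};q). Then Y(ζ) = (1−ζ)·∏_{i=1}^{n−1−km}(1−ζ^i) · Σ_{λ ⊢ n−km} |Fix_X(m^k, λ)| / ∏_{i≥1} (i(1−ζ^i))^{c_i} c_i!, where for each partition λ of n−km, c_i denotes the number of parts of λ equal to i. -/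

import Mathlib

/-- The `n`-cycle `x ↦ x + 1` on `ℤ/nℤ`, as a permutation. -/
def cyc (n : ℕ) : Equiv.Perm (ZMod n) := Equiv.addLeft (1 : ZMod n)

open Polynomial in
/-- The q-analogue `[n]_q = 1 + q + ⋯ + q^{n-1}` as a polynomial in `ℤ[q]`. -/
noncomputable def qInt (n : ℕ) : Polynomial ℤ := ∑ i ∈ Finset.range n, X ^ i

/-- The dimension of the degree-`d` component of the ring of `H`-invariant polynomials in
`ℂ[x_1, …, x_n]`, where `H ≤ S_n` permutes the variables. -/
noncomputable def invDim (n : ℕ) [NeZero n] (H : Subgroup (Equiv.Perm (ZMod n))) (d : ℕ) : ℕ :=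
  Module.finrank ℂ
    ↥((MvPolynomial.homogeneousSubmodule (ZMod n) ℂ d) ⊓
      ⨅ σ ∈ H, LinearMap.eqLocus
        (MvPolynomial.rename (σ : ZMod n → ZMod n) : MvPolynomial (ZMod n) ℂ →ₐ[ℂ] _).toLinearMap
        LinearMap.id)

/-- The Hilbert series `ℋ(ℂ[x]^H; q)` of the invariant ring, as a power series over `ℚ`. -/
noncomputable def hilbertSeries (n : ℕ) [NeZero n] (H : Subgroup (Equiv.Perm (ZMod n))) :
    PowerSeries ℚ :=
  PowerSeries.mk fun d => (invDim n H d : ℚ)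

/-!
Write `Q_μ(q) = ∏_{i ≤ n} (1 - q^i) / ∏_j (1 - q^{μ_j})` for a partition `μ` of `n`. Counting
monomials fixed by a permutation gives Molien's formula `|H| X(q) = ∑_{h ∈ H} Q_{type h}(q)`. Since
`|Fix_X(μ)| |H| = z_μ · #{h ∈ H : type h = μ}`, where `z_μ` is the order of the centralizer of a
permutation of type `μ`, this reads `X(q) = ∑_μ |Fix_X(μ)| Q_μ(q) / z_μ`.

At a primitive `m`-th root of unity `ζ` the numerator of `Q_μ` vanishes to order `⌊n/m⌋` and its
denominator to order the number of parts of `μ` divisible by `m`. Hence, with `n = k m + r` and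
`r < m`, only the partitions `(m^k, λ)` with `λ ⊢ r` survive. For those, the factors
`(1 - q^{mj}) / (1 - q^m)` evaluate to `j`, and the remaining factors of each block of `m`
consecutive ones multiply to `m`, so the numerator contributes `m^k k! ∏_{i ≤ r} (1 - ζ^i)`, where
`m^k k!` cancels against `z_{(m^k, λ)} = m^k k! z_λ`. Finally `[n]_ζ = (1 - ζ^r) / (1 - ζ)` is
nonzero when `m ∤ n`.
-/

section Invariants

variable {α : Type*} (R : Type*) [CommRing R]

/-- The degree-`d` component of the ring of `H`-invariants of `R[x_a : a ∈ α]`, where `H` permutes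
the variables. -/
noncomputable def homogeneousInvariants (H : Subgroup (Equiv.Perm α)) (d : ℕ) :
    Submodule R (MvPolynomial α R) :=
  MvPolynomial.homogeneousSubmodule α R d ⊓
    ⨅ σ ∈ H, LinearMap.eqLocus
      (MvPolynomial.rename (σ : α → α) : MvPolynomial α R →ₐ[R] _).toLinearMap LinearMap.id

/-- The Hilbert series of the graded ring `R[x_a : a ∈ α]^H`, with the invariants of each degree
measured by `Module.finrank`. -/
noncomputable def invariantHilbertSeries (H : Subgroup (Equiv.Perm α)) : PowerSeries ℚ :=
  PowerSeries.mk fun d => (Module.finrank R (homogeneousInvariants R H d) : ℚ)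

variable {R}

lemma mem_homogeneousInvariants {H : Subgroup (Equiv.Perm α)} {d : ℕ} {p : MvPolynomial α R} :
    p ∈ homogeneousInvariants R H d ↔
      p.IsHomogeneous d ∧ ∀ σ ∈ H, MvPolynomial.rename σ p = p := by
  simp only [homogeneousInvariants, Submodule.mem_inf, MvPolynomial.mem_homogeneousSubmodule,
    Submodule.mem_iInf, LinearMap.mem_eqLocus, AlgHom.toLinearMap_apply, LinearMap.id_coe, id_eq]

end Invariants

section ExponentVectors

attribute [local instance] Finsupp.comapMulAction

variable {α : Type*}

/-- The exponent vectors of the monomials of degree `d` in variables indexed by `α`, permuted by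
the permutations of the variables. -/
def exponentVectors (α : Type*) (d : ℕ) : SubMulAction (Equiv.Perm α) (α →₀ ℕ) where
  carrier := {s | s.degree = d}
  smul_mem' σ s hs := by
    exact (Finsupp.degree_mapDomain _ _).trans hs

variable {d : ℕ}

lemma exponentVectors_val_smul (σ : Equiv.Perm α) (s : exponentVectors α d) :
    (σ • s : exponentVectors α d).1 = s.1.mapDomain σ :=
  rfl

lemma exponentVectors_smul_apply (σ : Equiv.Perm α) (s : exponentVectors α d) (a : α) :
    (σ • s : exponentVectors α d).1 (σ a) = s.1 a :=
  Finsupp.mapDomain_apply σ.injective _ _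

instance [Finite α] : Finite (exponentVectors α d) :=
  (Finsupp.finite_of_degree_le d).subset fun _ hs => le_of_eq hs

end ExponentVectors

section OrbitPolynomials

variable {α : Type*} {R : Type*} [CommRing R] (H : Subgroup (Equiv.Perm α)) (d : ℕ)

/-- The orbits of `H` on the monomials of degree `d`. -/
abbrev MonomialOrbit : Type _ :=
  MulAction.orbitRel.Quotient H (exponentVectors α d)

variable {H d}

lemma coeff_smul_of_mem_homogeneousInvariants {p : MvPolynomial α R}
    (hp : p ∈ homogeneousInvariants R H d) (h : H) (s : exponentVectors α d) :
    p.coeff (h • s).1 = p.coeff s.1 := by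
  conv_lhs => rw [← (mem_homogeneousInvariants.1 hp).2 h.1 h.2]
  exact MvPolynomial.coeff_rename_mapDomain _ h.1.injective _ _

variable [Fintype (exponentVectors α d)]

variable (R H d) in
/-- The polynomial whose coefficients are constant on each orbit of monomials of degree `d`, with
prescribed values, and zero in all other degrees. -/
noncomputable def orbitPolynomial : (MonomialOrbit H d → R) →ₗ[R] MvPolynomial α R :=
  ∑ s : exponentVectors α d, MvPolynomial.monomial s.1 ∘ₗ LinearMap.proj ⟦s⟧

lemma orbitPolynomial_apply (c : MonomialOrbit H d → R) :
    orbitPolynomial R H d c = ∑ s : exponentVectors α d, MvPolynomial.monomial s.1 (c ⟦s⟧) := by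
  simp only [orbitPolynomial, LinearMap.sum_apply, LinearMap.comp_apply, LinearMap.proj_apply]

lemma coeff_orbitPolynomial (c : MonomialOrbit H d → R) (s : exponentVectors α d) :
    (orbitPolynomial R H d c).coeff s.1 = c ⟦s⟧ := by
  classical
  simp only [orbitPolynomial_apply, MvPolynomial.coeff_sum, MvPolynomial.coeff_monomial,
    Subtype.coe_inj, Finset.sum_ite_eq', Finset.mem_univ, if_true]

lemma orbitPolynomial_mem_homogeneousInvariants (c : MonomialOrbit H d → R) :
    orbitPolynomial R H d c ∈ homogeneousInvariants R H d := by
  rw [orbitPolynomial_apply, mem_homogeneousInvariants]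
  refine ⟨MvPolynomial.IsHomogeneous.sum _ _ _ fun s _ =>
    MvPolynomial.isHomogeneous_monomial _ s.2, fun σ hσ => ?_⟩
  rw [map_sum]
  refine Fintype.sum_equiv (MulAction.toPerm σ) _ _ fun s => ?_
  have same_orbit : (⟦σ • s⟧ : MonomialOrbit H d) = ⟦s⟧ :=
    Quotient.sound (MulAction.orbitRel_apply.2 ⟨⟨σ, hσ⟩, rfl⟩)
  rw [MvPolynomial.rename_monomial, MulAction.toPerm_apply, same_orbit, exponentVectors_val_smul]

lemma range_orbitPolynomial :
    LinearMap.range (orbitPolynomial R H d) = homogeneousInvariants R H d := by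
  refine le_antisymm ?_ fun p hp => ?_
  · rintro _ ⟨c, rfl⟩
    exact orbitPolynomial_mem_homogeneousInvariants c
  · have hcoeff (s t : exponentVectors α d) (hst : MulAction.orbitRel H _ s t) :
        p.coeff s.1 = p.coeff t.1 := by
      obtain ⟨h, rfl⟩ := MulAction.orbitRel_apply.1 hst
      exact coeff_smul_of_mem_homogeneousInvariants hp h t
    refine ⟨Quotient.lift (fun s => p.coeff s.1) hcoeff, MvPolynomial.ext _ _ fun s => ?_⟩
    by_cases hs : s.degree = d
    · exact coeff_orbitPolynomial _ ⟨s, hs⟩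
    · rw [(mem_homogeneousInvariants.1 hp).1.coeff_eq_zero hs,
        (mem_homogeneousInvariants.1
          (orbitPolynomial_mem_homogeneousInvariants _)).1.coeff_eq_zero hs]

lemma orbitPolynomial_injective : Function.Injective (orbitPolynomial R H d) := by
  intro c c' h
  ext q
  induction q using Quotient.inductionOn with
  | h s => rw [← coeff_orbitPolynomial c s, h, coeff_orbitPolynomial]

end OrbitPolynomials

section Burnside

variable {α : Type*} [Finite α] (R : Type*) [CommRing R] [Nontrivial R]
  (H : Subgroup (Equiv.Perm α))

lemma finrank_homogeneousInvariants (d : ℕ) :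
    Module.finrank R (homogeneousInvariants R H d) = Nat.card (MonomialOrbit H d) := by
  have := Fintype.ofFinite (exponentVectors α d)
  have := Fintype.ofFinite (MonomialOrbit H d)
  rw [← range_orbitPolynomial, LinearMap.finrank_range_of_inj orbitPolynomial_injective,
    Module.finrank_fintype_fun_eq_card, Nat.card_eq_fintype_card]

/-- The generating series by degree of the monomials fixed by the permutation `σ` of the
variables: the graded trace of `σ` on the polynomial ring. -/
noncomputable def fixedMonomialSeries (σ : Equiv.Perm α) : PowerSeries ℚ :=
  PowerSeries.mk fun d => (Nat.card (MulAction.fixedBy (exponentVectors α d) σ) : ℚ)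

theorem invariantHilbertSeries_mul_card [Fintype H] :
    invariantHilbertSeries R H * (Nat.card H : PowerSeries ℚ) =
      ∑ h : H, fixedMonomialSeries h.1 := by
  classical
  ext d
  have := Fintype.ofFinite (exponentVectors α d)
  have := Fintype.ofFinite (MonomialOrbit H d)
  have burnside := MulAction.sum_card_fixedBy_eq_card_orbits_mul_card_group H (exponentVectors α d)
  simp only [← Nat.card_eq_fintype_card] at burnside
  rw [← map_natCast PowerSeries.C, PowerSeries.coeff_mul_C, invariantHilbertSeries,
    PowerSeries.coeff_mk, finrank_homogeneousInvariants, ← Nat.cast_mul, ← burnside, map_sum]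
  simp only [fixedMonomialSeries, PowerSeries.coeff_mk, Nat.cast_sum]
  rfl

end Burnside

section WeightedCount

variable {ι : Type*} [Fintype ι] {w : ι → ℕ}

lemma mk_dvd_mul_one_sub_X_pow (R : Type*) [CommRing R] {a : ℕ} (ha : 0 < a) :
    PowerSeries.mk (fun d => if a ∣ d then (1 : R) else 0) * (1 - PowerSeries.X ^ a) = 1 := by
  ext d
  rw [mul_sub, mul_one, map_sub, PowerSeries.coeff_mul_X_pow', PowerSeries.coeff_mk,
    PowerSeries.coeff_one]
  by_cases had : a ≤ d
  · have d_ne : d ≠ 0 := by omega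
    simp [had, d_ne, Nat.dvd_sub_iff_left had dvd_rfl]
  · by_cases d_eq : d = 0
    · simp [d_eq, ha.ne']
    · simp [had, d_eq, Nat.not_dvd_of_pos_of_lt (Nat.pos_of_ne_zero d_eq) (not_le.1 had)]

lemma weight_eq_sum_mul (s : ι →₀ ℕ) : Finsupp.weight w s = ∑ i, s i * w i := by
  rw [Finsupp.weight_apply]
  exact Finsupp.sum_fintype _ _ fun i => zero_smul ℕ (w i)

lemma card_weight_eq_card_finsuppAntidiag [DecidableEq ι] (hw : ∀ i, 0 < w i) (d : ℕ) :
    Nat.card {s : ι →₀ ℕ // Finsupp.weight w s = d} =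
      ((Finset.univ.finsuppAntidiag d).filter fun t => ∀ i, w i ∣ t i).card := by
  rw [← Fintype.card_coe, ← Nat.card_eq_fintype_card]
  refine Nat.card_congr (Equiv.ofBijective
    (fun s => ⟨Finsupp.equivFunOnFinite.symm fun i => s.1 i * w i, ?_⟩) ⟨?_, ?_⟩)
  · simpa [weight_eq_sum_mul] using s.2
  · intro s s' h
    exact Subtype.ext <| Finsupp.ext fun i =>
      Nat.eq_of_mul_eq_mul_right (hw i) (DFunLike.congr_fun (congrArg Subtype.val h) i)
  · rintro ⟨t, ht⟩
    obtain ⟨ht, hdvd⟩ := Finset.mem_filter.1 ht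
    refine ⟨⟨Finsupp.equivFunOnFinite.symm fun i => t i / w i, ?_⟩,
      Subtype.ext <| Finsupp.ext fun i => Nat.div_mul_cancel (hdvd i)⟩
    rw [weight_eq_sum_mul, ← (Finset.mem_finsuppAntidiag.1 ht).1]
    exact Finset.sum_congr rfl fun i _ => Nat.div_mul_cancel (hdvd i)

lemma mk_card_weight_mul_prod (R : Type*) [CommRing R] (hw : ∀ i, 0 < w i) :
    PowerSeries.mk (fun d => (Nat.card {s : ι →₀ ℕ // Finsupp.weight w s = d} : R)) *
      ∏ i, (1 - PowerSeries.X ^ w i) = 1 := by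
  classical
  have product_formula :
      PowerSeries.mk (fun d => (Nat.card {s : ι →₀ ℕ // Finsupp.weight w s = d} : R)) =
        ∏ i, PowerSeries.mk (fun d => if w i ∣ d then (1 : R) else 0) := by
    ext d
    simp only [PowerSeries.coeff_prod, PowerSeries.coeff_mk, Finset.prod_ite_zero,
      Finset.prod_const_one, Finset.mem_univ, true_imp_iff, Finset.sum_boole,
      card_weight_eq_card_finsuppAntidiag hw]
  rw [product_formula, ← Finset.prod_mul_distrib]
  exact Finset.prod_eq_one fun i _ => mk_dvd_mul_one_sub_X_pow R (hw i)

end WeightedCount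

section FixedMonomials

variable {α ι : Type*} {σ : Equiv.Perm α} {π : α → ι} {d : ℕ}

lemma eq_of_sameCycle_of_smul_eq {s : exponentVectors α d} (hs : σ • s = s) {a b : α}
    (hab : σ.SameCycle a b) : s.1 a = s.1 b := by
  obtain ⟨i, rfl⟩ := hab
  have hi : σ ^ i ∈ MulAction.stabilizer (Equiv.Perm α) s := zpow_mem hs i
  conv_rhs => rw [← MulAction.mem_stabilizer_iff.1 hi]
  exact (exponentVectors_smul_apply (σ ^ i) s a).symm

variable [Fintype α] [Finite ι] [DecidableEq ι]

lemma sum_comp_eq_weight (g : ι →₀ ℕ) :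
    ∑ a, g (π a) = Finsupp.weight (fun i => (Finset.univ.filter (π · = i)).card) g := by
  cases nonempty_fintype ι
  rw [weight_eq_sum_mul, ← Finset.sum_fiberwise Finset.univ π]
  refine Finset.sum_congr rfl fun i _ => ?_
  rw [Finset.sum_congr rfl fun a ha => congrArg g (Finset.mem_filter.1 ha).2, Finset.sum_const,
    smul_eq_mul, mul_comm]

lemma card_fixedBy_exponentVectors (hπ : Function.Surjective π)
    (hσ : ∀ a b, π a = π b ↔ σ.SameCycle a b) :
    Nat.card (MulAction.fixedBy (exponentVectors α d) σ) =
      Nat.card {g : ι →₀ ℕ //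
        Finsupp.weight (fun i => (Finset.univ.filter (π · = i)).card) g = d} := by
  symm
  refine Nat.card_congr (Equiv.ofBijective
    (fun g => ⟨⟨Finsupp.equivFunOnFinite.symm (g.1 ∘ π), ?_⟩, ?_⟩) ⟨?_, ?_⟩)
  · exact (Finsupp.degree_eq_sum _).trans ((sum_comp_eq_weight g.1).trans g.2)
  · refine Subtype.ext (Finsupp.ext fun a => ?_)
    obtain ⟨a, rfl⟩ := σ.surjective a
    rw [exponentVectors_smul_apply]
    exact congrArg g.1 ((hσ _ _).2 (σ.sameCycle_apply_right.2 (.refl _ _)))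
  · intro g g' h
    refine Subtype.ext (Finsupp.ext fun i => ?_)
    obtain ⟨a, rfl⟩ := hπ i
    exact DFunLike.congr_fun (congrArg (fun s => s.1.1) h) a
  · rintro ⟨s, hs⟩
    have section_eq (a : α) : s.1 (Function.surjInv hπ (π a)) = s.1 a :=
      eq_of_sameCycle_of_smul_eq hs ((hσ _ _).1 (Function.surjInv_eq hπ _))
    refine ⟨⟨Finsupp.equivFunOnFinite.symm fun i => s.1 (Function.surjInv hπ i), ?_⟩,
      Subtype.ext (Subtype.ext (Finsupp.ext section_eq))⟩
    rw [← sum_comp_eq_weight]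
    refine (Finset.sum_congr rfl fun a _ => section_eq a).trans ?_
    exact (Finsupp.degree_eq_sum _).symm.trans s.2

end FixedMonomials

section CycleIndex

variable {α : Type*} [Fintype α] [DecidableEq α] {σ : Equiv.Perm α}

variable (σ) in
/-- The cycle of `σ` through `a`, fixed points being recorded separately. -/
def cycleIndex (a : α) : σ.cycleFactorsFinset ⊕ {a // σ a = a} :=
  if h : σ a = a then .inr ⟨a, h⟩ else
    .inl ⟨σ.cycleOf a, Equiv.Perm.cycleOf_mem_cycleFactorsFinset_iff.2
      (Equiv.Perm.mem_support.2 h)⟩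

lemma cycleIndex_eq_inl_iff {a : α} {c : σ.cycleFactorsFinset} :
    cycleIndex σ a = .inl c ↔ a ∈ c.1.support := by
  unfold cycleIndex
  split_ifs with h
  · refine iff_of_false id fun ha => ?_
    exact Equiv.Perm.mem_support.1 (Equiv.Perm.mem_cycleFactorsFinset_support_le c.2 ha) h
  · rw [Sum.inl.injEq, ← Subtype.coe_inj]
    refine ⟨fun hc => ?_, fun ha => (Equiv.Perm.cycle_is_cycleOf ha c.2).symm⟩
    rw [← hc, Equiv.Perm.mem_support_cycleOf_iff]
    exact ⟨.refl _ _, Equiv.Perm.mem_support.2 h⟩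

lemma cycleIndex_eq_inr_iff {a : α} {b : {a // σ a = a}} : cycleIndex σ a = .inr b ↔ a = b.1 := by
  unfold cycleIndex
  split_ifs with h
  · rw [Sum.inr.injEq, Subtype.ext_iff]
  · exact iff_of_false id (by rintro rfl; exact h b.2)

variable (σ) in
lemma cycleIndex_surjective : Function.Surjective (cycleIndex σ) := by
  rintro (c | b)
  · obtain ⟨a, ha⟩ := (Equiv.Perm.mem_cycleFactorsFinset_iff.1 c.2).1.nonempty_support
    exact ⟨a, cycleIndex_eq_inl_iff.2 ha⟩
  · exact ⟨b.1, cycleIndex_eq_inr_iff.2 rfl⟩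

lemma cycleIndex_eq_iff_sameCycle (a b : α) :
    cycleIndex σ a = cycleIndex σ b ↔ σ.SameCycle a b := by
  by_cases ha : σ a = a
  · have index_a : cycleIndex σ a = .inr ⟨a, ha⟩ := dif_pos ha
    rw [index_a, eq_comm, cycleIndex_eq_inr_iff, Equiv.Perm.sameCycle_comm]
    exact ⟨fun h => h ▸ .refl _ _, fun h => h.eq_of_right ha⟩
  · have index_a : cycleIndex σ a = .inl ⟨σ.cycleOf a, _⟩ := dif_neg ha
    rw [index_a, eq_comm, cycleIndex_eq_inl_iff, Equiv.Perm.mem_support_cycleOf_iff]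
    exact and_iff_left (Equiv.Perm.mem_support.2 ha)

variable (σ) in
lemma partition_parts_eq_map_card_cycleIndex :
    σ.partition.parts =
      Finset.univ.val.map fun i => (Finset.univ.filter (cycleIndex σ · = i)).card := by
  have univ_eq : (Finset.univ : Finset (σ.cycleFactorsFinset ⊕ {a // σ a = a})).val =
      Finset.univ.val.map Sum.inl + Finset.univ.val.map Sum.inr :=
    rfl
  rw [univ_eq, Multiset.map_add, Multiset.map_map, Multiset.map_map, Equiv.Perm.parts_partition]
  congr 1
  · simp only [Function.comp_def, cycleIndex_eq_inl_iff, Finset.filter_univ_mem]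
    exact (Multiset.attach_map_val' _ _).symm
  · simp only [Function.comp_def, cycleIndex_eq_inr_iff, Finset.filter_eq', Finset.mem_univ,
      if_true, Finset.card_singleton, Multiset.map_const']
    rw [Finset.card_val, Finset.card_univ, ← σ.sum_cycleType, ← Equiv.Perm.card_fixedPoints]
    rfl

theorem fixedMonomialSeries_mul_prod (σ : Equiv.Perm α) :
    fixedMonomialSeries σ * (σ.partition.parts.map fun l => 1 - PowerSeries.X ^ l).prod = 1 := by
  have card_fiber_pos (i) : 0 < (Finset.univ.filter (cycleIndex σ · = i)).card := by
    obtain ⟨a, ha⟩ := cycleIndex_surjective σ i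
    exact Finset.card_pos.2 ⟨a, Finset.mem_filter.2 ⟨Finset.mem_univ a, ha⟩⟩
  rw [partition_parts_eq_map_card_cycleIndex, Multiset.map_map, fixedMonomialSeries]
  simp_rw [card_fixedBy_exponentVectors (cycleIndex_surjective σ) cycleIndex_eq_iff_sameCycle]
  exact mk_card_weight_mul_prod ℚ card_fiber_pos

end CycleIndex

section SymmetricPolynomials

open MvPolynomial

variable {α τ R : Type*} [CommRing R]

lemma esymm_isHomogeneous [Fintype α] (i : ℕ) : (esymm α R i).IsHomogeneous i := by
  refine IsHomogeneous.sum _ _ _ fun t ht => ?_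
  have degree_eq : ∑ _a ∈ t, 1 = i := by
    rw [← Finset.card_eq_sum_ones, (Finset.mem_powersetCard.1 ht).2]
  exact degree_eq ▸ IsHomogeneous.prod t X (fun _ => 1) fun a _ => isHomogeneous_X R a

lemma aeval_monomial_isHomogeneous {f : τ → MvPolynomial α R} {w : τ → ℕ}
    (hf : ∀ i, (f i).IsHomogeneous (w i)) (s : τ →₀ ℕ) (r : R) :
    (aeval f (monomial s r)).IsHomogeneous (Finsupp.weight w s) := by
  rw [aeval_monomial, Finsupp.weight_apply, ← zero_add (Finsupp.sum _ _)]
  refine (isHomogeneous_C α r).mul (IsHomogeneous.prod _ _ _ fun i _ => ?_)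
  change (f i ^ s i).IsHomogeneous (s i * w i)
  exact mul_comm (w i) (s i) ▸ (hf i).pow (s i)

lemma homogeneousComponent_aeval {f : τ → MvPolynomial α R} {w : τ → ℕ}
    (hf : ∀ i, (f i).IsHomogeneous (w i)) (d : ℕ) (p : MvPolynomial τ R) :
    homogeneousComponent d (aeval f p) = aeval f (weightedHomogeneousComponent w d p) := by
  induction p using MvPolynomial.induction_on' with
  | monomial s r =>
    rw [homogeneousComponent_of_mem (aeval_monomial_isHomogeneous hf s r),
      weightedHomogeneousComponent_of_mem (isWeightedHomogeneous_monomial w s r rfl),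
      apply_ite (aeval f), map_zero]
  | add p q hp hq => simp only [map_add, hp, hq]

lemma homogeneousInvariants_top_eq_map [Fintype α] (d : ℕ) :
    homogeneousInvariants R (⊤ : Subgroup (Equiv.Perm α)) d =
      (weightedHomogeneousSubmodule R (fun i : Fin (Fintype.card α) => i.1 + 1) d).map
        (aeval fun i : Fin (Fintype.card α) => esymm α R (i.1 + 1)).toLinearMap := by
  have hesymm (i : Fin (Fintype.card α)) : (esymm α R (i.1 + 1)).IsHomogeneous (i.1 + 1) :=
    esymm_isHomogeneous _
  ext p
  rw [mem_homogeneousInvariants, Submodule.mem_map]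
  constructor
  · rintro ⟨hp, hsymm⟩
    obtain ⟨q, hq⟩ := esymmAlgHom_surjective R le_rfl ⟨p, fun σ => hsymm σ trivial⟩
    rw [Subtype.ext_iff, esymmAlgHom_apply] at hq
    refine ⟨_, weightedHomogeneousComponent_mem _ q d, ?_⟩
    rw [AlgHom.toLinearMap_apply, ← homogeneousComponent_aeval hesymm, hq,
      homogeneousComponent_of_mem hp, if_pos rfl]
  · rintro ⟨q, hq, rfl⟩
    rw [AlgHom.toLinearMap_apply]
    refine ⟨?_, fun σ _ => ?_⟩
    · rw [← weightedHomogeneousComponent_of_mem hq |>.trans (if_pos rfl),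
        ← homogeneousComponent_aeval hesymm]
      exact homogeneousComponent_isHomogeneous _ _
    · rw [← esymmAlgHom_apply]
      exact (esymmAlgHom α R _ q).2 σ

lemma finrank_weightedHomogeneousSubmodule [Nontrivial R] (w : τ → ℕ) (d : ℕ) :
    Module.finrank R (weightedHomogeneousSubmodule R w d) =
      Nat.card {s : τ →₀ ℕ // Finsupp.weight w s = d} := by
  rw [weightedHomogeneousSubmodule_eq_finsupp_supported]
  exact Module.finrank_eq_nat_card_basis (basisRestrictSupport R {s | Finsupp.weight w s = d})

theorem invariantHilbertSeries_top_mul_prod [Fintype α] [Nontrivial R] :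
    invariantHilbertSeries R (⊤ : Subgroup (Equiv.Perm α)) *
      ∏ i ∈ Finset.range (Fintype.card α), (1 - PowerSeries.X ^ (i + 1)) = 1 := by
  have esymm_injective : Function.Injective
      (aeval (R := R) fun i : Fin (Fintype.card α) => esymm α R (i.1 + 1)).toLinearMap := by
    intro p q h
    refine esymmAlgHom_injective R le_rfl (Subtype.ext ?_)
    rwa [esymmAlgHom_apply, esymmAlgHom_apply]
  have finrank_top (d : ℕ) :
      Module.finrank R (homogeneousInvariants R (⊤ : Subgroup (Equiv.Perm α)) d) =
        Nat.card {s : Fin (Fintype.card α) →₀ ℕ // Finsupp.weight (fun i => i.1 + 1) s = d} := by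
    rw [homogeneousInvariants_top_eq_map, ← finrank_weightedHomogeneousSubmodule (R := R)]
    exact (Submodule.equivMapOfInjective _ esymm_injective _).finrank_eq.symm
  simp only [invariantHilbertSeries, finrank_top]
  rw [← Fin.prod_univ_eq_prod_range fun i => 1 - (PowerSeries.X : PowerSeries ℚ) ^ (i + 1)]
  exact mk_card_weight_mul_prod ℚ fun i => i.1.succ_pos

end SymmetricPolynomials

section MolienQuotient

open Polynomial

lemma prod_one_sub_pow_dvd_prod_range {A : Type*} [CommRing A] (x : A) (s : Multiset ℕ)
    (hs : ∀ l ∈ s, 0 < l) :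
    (s.map fun l => 1 - x ^ l).prod ∣ ∏ i ∈ Finset.range s.sum, (1 - x ^ (i + 1)) := by
  induction s using Multiset.induction_on with
  | empty => simp only [Multiset.map_zero, Multiset.prod_zero, one_dvd]
  | cons a s ih =>
    have a_pos : 0 < a := hs a (Multiset.mem_cons_self a s)
    obtain ⟨i, hi, dvd_i⟩ : ∃ i < a, a ∣ s.sum + i + 1 := by
      refine ⟨a - 1 - s.sum % a, by omega, s.sum / a + 1, ?_⟩
      have := Nat.div_add_mod s.sum a
      have := Nat.mod_lt s.sum a_pos
      rw [mul_add]
      omega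
    rw [Multiset.map_cons, Multiset.prod_cons, Multiset.sum_cons, add_comm a, Finset.prod_range_add,
      mul_comm]
    refine mul_dvd_mul (ih fun l hl => hs l (Multiset.mem_cons_of_mem hl)) ?_
    obtain ⟨c, hc⟩ := dvd_i
    have dvd_factor : 1 - x ^ a ∣ 1 - x ^ (s.sum + i + 1) := by
      rw [hc, pow_mul]
      exact one_sub_dvd_one_sub_pow _ c
    exact dvd_factor.trans (Finset.dvd_prod_of_mem _ (Finset.mem_range.2 hi))

variable {n : ℕ}

lemma exists_mul_eq_prod_range (μ : n.Partition) :
    ∃ q : ℤ[X], (μ.parts.map fun l => 1 - (X : ℤ[X]) ^ l).prod * q =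
      ∏ i ∈ Finset.range n, (1 - X ^ (i + 1)) := by
  obtain ⟨q, hq⟩ := prod_one_sub_pow_dvd_prod_range (X : ℤ[X]) μ.parts fun l hl => μ.parts_pos hl
  exact ⟨q, by rw [← hq, μ.parts_sum]⟩

/-- The polynomial `∏_{i ≤ n} (1 - q^i) / ∏_j (1 - q^{μ_j})` attached to a partition `μ` of `n`:
the contribution of a permutation of cycle type `μ` to the Molien quotient. -/
noncomputable def molienQuotient (μ : n.Partition) : ℤ[X] :=
  (exists_mul_eq_prod_range μ).choose

lemma prod_mul_molienQuotient (μ : n.Partition) :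
    (μ.parts.map fun l => 1 - (X : ℤ[X]) ^ l).prod * molienQuotient μ =
      ∏ i ∈ Finset.range n, (1 - X ^ (i + 1)) :=
  (exists_mul_eq_prod_range μ).choose_spec

/-- Integral polynomials as rational power series. -/
noncomputable def toRatPowerSeries : ℤ[X] →+* PowerSeries ℚ :=
  coeToPowerSeries.ringHom.comp (mapRingHom (Int.castRingHom ℚ))

lemma toRatPowerSeries_injective : Function.Injective toRatPowerSeries :=
  (coe_injective ℚ).comp (map_injective _ Int.cast_injective)

lemma toRatPowerSeries_X : toRatPowerSeries X = PowerSeries.X := by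
  simp only [toRatPowerSeries, RingHom.comp_apply, coe_mapRingHom, map_X,
    coeToPowerSeries.ringHom_apply, coe_X]

theorem card_mul_eq_sum_molienQuotient {α R : Type*} [Fintype α] [DecidableEq α] [CommRing R]
    [Nontrivial R] (H : Subgroup (Equiv.Perm α)) [Fintype H] {f : ℤ[X]}
    (hf : toRatPowerSeries f * invariantHilbertSeries R (⊤ : Subgroup (Equiv.Perm α)) =
      invariantHilbertSeries R H) :
    (Nat.card H : ℤ[X]) * f = ∑ h : H, molienQuotient h.1.partition := by
  apply toRatPowerSeries_injective
  have top_series : invariantHilbertSeries R (⊤ : Subgroup (Equiv.Perm α)) * toRatPowerSeries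
      (∏ i ∈ Finset.range (Fintype.card α), (1 - X ^ (i + 1))) = 1 := by
    simpa only [map_prod, map_sub, map_one, map_pow, toRatPowerSeries_X] using
      invariantHilbertSeries_top_mul_prod
  have term (σ : Equiv.Perm α) : fixedMonomialSeries σ * toRatPowerSeries
      (∏ i ∈ Finset.range (Fintype.card α), (1 - X ^ (i + 1))) =
        toRatPowerSeries (molienQuotient σ.partition) := by
    rw [← prod_mul_molienQuotient σ.partition, map_mul, ← mul_assoc, map_multiset_prod,
      Multiset.map_map]
    simp only [Function.comp_def, map_sub, map_one, map_pow, toRatPowerSeries_X,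
      fixedMonomialSeries_mul_prod, one_mul]
  calc toRatPowerSeries (Nat.card H * f)
      = toRatPowerSeries f * (invariantHilbertSeries R ⊤ * toRatPowerSeries
          (∏ i ∈ Finset.range (Fintype.card α), (1 - X ^ (i + 1)))) * Nat.card H := by
        rw [top_series, mul_one, map_mul, map_natCast, mul_comm]
    _ = invariantHilbertSeries R H * Nat.card H * toRatPowerSeries
          (∏ i ∈ Finset.range (Fintype.card α), (1 - X ^ (i + 1))) := by
        rw [← hf]
        ring
    _ = toRatPowerSeries (∑ h : H, molienQuotient h.1.partition) := by
        rw [invariantHilbertSeries_mul_card, Finset.sum_mul, map_sum]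
        exact Finset.sum_congr rfl fun h _ => term h.1

end MolienQuotient

section RootOfUnity

open Polynomial

/-- The polynomial `1 - q^i` with the factor `1 - q^m` divided out when `m ∣ i`. It does not
vanish at primitive `m`-th roots of unity. -/
noncomputable def reducedFactor (m i : ℕ) : ℤ[X] :=
  if m ∣ i then ∑ j ∈ Finset.range (i / m), (X ^ m) ^ j else 1 - X ^ i

lemma pow_mul_reducedFactor {m : ℕ} (hm : 0 < m) (i : ℕ) :
    (1 - X ^ m) ^ (if m ∣ i then 1 else 0) * reducedFactor m i = 1 - X ^ i := by
  unfold reducedFactor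
  split_ifs with h
  · obtain ⟨j, rfl⟩ := h
    rw [Nat.mul_div_cancel_left _ hm, pow_one, mul_neg_geom_sum, pow_mul]
  · rw [pow_zero, one_mul]

lemma prod_map_one_sub_pow {m : ℕ} (hm : 0 < m) (s : Multiset ℕ) :
    (s.map fun l => 1 - (X : ℤ[X]) ^ l).prod =
      (1 - X ^ m) ^ s.countP (m ∣ ·) * (s.map (reducedFactor m)).prod := by
  induction s using Multiset.induction_on with
  | empty => simp only [Multiset.map_zero, Multiset.prod_zero, Multiset.countP_zero, pow_zero,
      mul_one]
  | cons a s ih =>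
    rw [Multiset.map_cons, Multiset.prod_cons, ih, ← pow_mul_reducedFactor hm a,
      Multiset.countP_cons, Multiset.map_cons, Multiset.prod_cons, pow_add]
    ring

lemma prod_range_one_sub_pow {m : ℕ} (hm : 0 < m) (n : ℕ) :
    ∏ i ∈ Finset.range n, (1 - (X : ℤ[X]) ^ (i + 1)) =
      (1 - X ^ m) ^ (n / m) * ∏ i ∈ Finset.range n, reducedFactor m (i + 1) := by
  rw [Finset.prod_congr rfl fun i _ => (pow_mul_reducedFactor hm (i + 1)).symm,
    Finset.prod_mul_distrib, Finset.prod_pow_eq_pow_sum, ← Finset.card_filter, Nat.card_multiples]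

lemma sum_filter_parts_add {n : ℕ} (p : ℕ → Prop) [DecidablePred p] (μ : n.Partition) :
    (μ.parts.filter p).sum + (μ.parts.filter (¬ p ·)).sum = n := by
  rw [← Multiset.sum_add, Multiset.filter_add_not, μ.parts_sum]

lemma le_of_mem_filter_dvd_parts {m n l : ℕ} {μ : n.Partition}
    (hl : l ∈ μ.parts.filter (m ∣ ·)) : m ≤ l :=
  Nat.le_of_dvd (μ.parts_pos (Multiset.mem_of_mem_filter hl)) (Multiset.of_mem_filter hl)

lemma countP_dvd_parts_le {m n : ℕ} (hm : 0 < m) (μ : n.Partition) :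
    μ.parts.countP (m ∣ ·) ≤ n / m := by
  have := sum_filter_parts_add (m ∣ ·) μ
  rw [Nat.le_div_iff_mul_le hm, Multiset.countP_eq_card_filter, ← smul_eq_mul]
  exact (Multiset.card_nsmul_le_sum fun _ => le_of_mem_filter_dvd_parts).trans (by omega)

lemma prod_reducedFactor_mul_molienQuotient {m n : ℕ} (hm : 0 < m) (μ : n.Partition) :
    (μ.parts.map (reducedFactor m)).prod * molienQuotient μ =
      (1 - X ^ m) ^ (n / m - μ.parts.countP (m ∣ ·)) *
        ∏ i ∈ Finset.range n, reducedFactor m (i + 1) := by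
  have one_sub_ne_zero : (1 - X ^ m : ℤ[X]) ≠ 0 := by
    rw [← neg_ne_zero, neg_sub]
    exact X_pow_sub_C_ne_zero hm 1
  refine mul_left_cancel₀ (pow_ne_zero (μ.parts.countP (m ∣ ·)) one_sub_ne_zero) ?_
  rw [← mul_assoc, ← mul_assoc, ← prod_map_one_sub_pow hm, prod_mul_molienQuotient, ← pow_add,
    Nat.add_sub_cancel' (countP_dvd_parts_le hm μ), prod_range_one_sub_pow hm]

variable {K : Type*} [CommRing K] {m : ℕ} {ζ : K}

lemma aeval_reducedFactor_of_not_dvd {i : ℕ} (h : ¬ m ∣ i) :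
    aeval ζ (reducedFactor m i) = 1 - ζ ^ i := by
  rw [reducedFactor, if_neg h, map_sub, map_one, map_pow, aeval_X]

lemma aeval_reducedFactor_mul (hm : 0 < m) (hζ : ζ ^ m = 1) (j : ℕ) :
    aeval ζ (reducedFactor m (m * j)) = j := by
  simp only [reducedFactor, dvd_mul_right, if_true, Nat.mul_div_cancel_left _ hm, map_sum, map_pow,
    aeval_X, hζ, one_pow, Finset.sum_const, Finset.card_range, nsmul_one]

lemma aeval_reducedFactor_ne_zero [CharZero K] (hm : 0 < m) {i : ℕ} (hi : 0 < i)
    (hζ : IsPrimitiveRoot ζ m) : aeval ζ (reducedFactor m i) ≠ 0 := by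
  by_cases h : m ∣ i
  · obtain ⟨j, rfl⟩ := h
    rw [aeval_reducedFactor_mul hm hζ.pow_eq_one]
    exact Nat.cast_ne_zero.2 (Nat.pos_of_mul_pos_left hi).ne'
  · rw [aeval_reducedFactor_of_not_dvd h, sub_ne_zero]
    exact fun h' => h (hζ.dvd_of_pow_eq_one _ h'.symm)

lemma aeval_reducedFactor_mul_add (hζ : ζ ^ m = 1) (j : ℕ) {i : ℕ} (hi : 0 < i) (him : i < m) :
    aeval ζ (reducedFactor m (m * j + i)) = 1 - ζ ^ i := by
  have not_dvd : ¬ m ∣ m * j + i := fun h =>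
    Nat.not_dvd_of_pos_of_lt hi him ((Nat.dvd_add_right (dvd_mul_right m j)).1 h)
  rw [aeval_reducedFactor_of_not_dvd not_dvd, pow_add, pow_mul, hζ, one_pow, one_mul]

variable [IsDomain K]

lemma prod_range_aeval_reducedFactor_mul (hm : 0 < m) (hζ : IsPrimitiveRoot ζ m) (k : ℕ) :
    ∏ i ∈ Finset.range (m * k), aeval ζ (reducedFactor m (i + 1)) = m ^ k * k.factorial := by
  obtain ⟨m, rfl⟩ := Nat.exists_eq_add_one_of_ne_zero hm.ne'
  have block (j : ℕ) : ∏ i ∈ Finset.range (m + 1),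
      aeval ζ (reducedFactor (m + 1) ((m + 1) * j + i + 1)) = (m + 1 : ℕ) * (j + 1 : ℕ) := by
    have nonmultiples : ∏ i ∈ Finset.range m,
        aeval ζ (reducedFactor (m + 1) ((m + 1) * j + i + 1)) = (m + 1 : ℕ) := by
      rw [Nat.cast_add_one, ← hζ.prod_one_sub_pow_eq_order]
      refine Finset.prod_congr rfl fun i hi => ?_
      exact aeval_reducedFactor_mul_add hζ.pow_eq_one j i.succ_pos
        (Nat.succ_lt_succ (Finset.mem_range.1 hi))
    rw [Finset.prod_range_succ, nonmultiples, add_assoc, ← mul_add_one,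
      aeval_reducedFactor_mul hm hζ.pow_eq_one]
  induction k with
  | zero => simp only [mul_zero, Finset.range_zero, Finset.prod_empty, pow_zero, one_mul,
      Nat.factorial_zero, Nat.cast_one]
  | succ k ih =>
    rw [mul_add_one, Finset.prod_range_add, ih, block, Nat.factorial_succ, Nat.cast_mul]
    ring

lemma prod_range_aeval_reducedFactor (hm : 0 < m) (hζ : IsPrimitiveRoot ζ m) (k : ℕ) {r : ℕ}
    (hr : r < m) :
    ∏ i ∈ Finset.range (m * k + r), aeval ζ (reducedFactor m (i + 1)) =
      m ^ k * k.factorial * ∏ i ∈ Finset.range r, (1 - ζ ^ (i + 1)) := by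
  rw [Finset.prod_range_add, prod_range_aeval_reducedFactor_mul hm hζ]
  congr 1
  refine Finset.prod_congr rfl fun i hi => ?_
  exact aeval_reducedFactor_mul_add hζ.pow_eq_one k i.succ_pos
    ((Nat.succ_le_of_lt (Finset.mem_range.1 hi)).trans_lt hr)

lemma aeval_molienQuotient_eq_zero [CharZero K] (hm : 0 < m) (hζ : IsPrimitiveRoot ζ m) {n : ℕ}
    {μ : n.Partition} (hμ : μ.parts.countP (m ∣ ·) ≠ n / m) : aeval ζ (molienQuotient μ) = 0 := by
  have countP_lt : μ.parts.countP (m ∣ ·) < n / m :=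
    lt_of_le_of_ne (countP_dvd_parts_le hm μ) hμ
  have evaluated := congrArg (aeval ζ) (prod_reducedFactor_mul_molienQuotient hm μ)
  rw [map_mul, map_mul, map_pow, map_sub, map_one, map_pow, aeval_X, hζ.pow_eq_one, sub_self,
    zero_pow (Nat.sub_pos_of_lt countP_lt).ne', zero_mul, map_multiset_prod, Multiset.map_map]
    at evaluated
  refine (mul_eq_zero.1 evaluated).resolve_left (Multiset.prod_ne_zero fun zero_mem => ?_)
  obtain ⟨l, hl, factor_eq_zero⟩ := Multiset.mem_map.1 zero_mem
  exact aeval_reducedFactor_ne_zero hm (μ.parts_pos hl) hζ factor_eq_zero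

end RootOfUnity

section FixedCosets

variable {G : Type*} [Group G]

lemma card_smul_mem {X : Type*} [MulAction G X] (x : X) (S : Set X) :
    Nat.card {g : G // g • x ∈ S} =
      Nat.card (MulAction.stabilizer G x) * Nat.card {y : MulAction.orbit G x // y.1 ∈ S} := by
  rw [← Nat.card_prod]
  exact Nat.card_congr <| (QuotientGroup.preimageMkEquivSubgroupProdSet _
    {q | ((MulAction.orbitEquivQuotientStabilizer G x).symm q).1 ∈ S}).trans <|
      (Equiv.refl _).prodCongr <|
        (MulAction.orbitEquivQuotientStabilizer G x).symm.subtypeEquiv fun _ => Iff.rfl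

lemma card_conj_mem (H : Subgroup G) (γ : G) :
    Nat.card {g : G // g⁻¹ * γ * g ∈ H} =
      Nat.card (Subgroup.centralizer {γ}) * Nat.card {h : H // IsConj γ h.1} := by
  have orbit_equiv : {y : MulAction.orbit (ConjAct G) γ // y.1 ∈ (H : Set G)} ≃
      {h : H // IsConj γ h.1} :=
    (Equiv.subtypeSubtypeEquivSubtypeInter _ _).trans <|
      (Equiv.subtypeEquivRight fun h => by
        rw [ConjAct.mem_orbit_conjAct, isConj_comm, SetLike.mem_coe, and_comm]).trans
        (Equiv.subtypeSubtypeEquivSubtypeInter (· ∈ H) (IsConj γ)).symm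
  rw [Subgroup.nat_card_centralizer_nat_card_stabilizer, ← Nat.card_congr orbit_equiv,
    ← card_smul_mem]
  refine Nat.card_congr (((Equiv.inv G).trans ConjAct.toConjAct.toEquiv).subtypeEquiv fun g => ?_)
  simp [ConjAct.smul_def]

lemma mk_mem_fixedBy_iff (H : Subgroup G) (γ g : G) :
    (g : G ⧸ H) ∈ MulAction.fixedBy (G ⧸ H) γ ↔ g⁻¹ * γ * g ∈ H := by
  rw [MulAction.mem_fixedBy, eq_comm, MulAction.Quotient.smul_coe, QuotientGroup.eq, smul_eq_mul,
    mul_assoc]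

theorem card_fixedBy_quotient_mul_card (H : Subgroup G) (γ : G) :
    Nat.card (MulAction.fixedBy (G ⧸ H) γ) * Nat.card H =
      Nat.card (Subgroup.centralizer {γ}) * Nat.card {h : H // IsConj γ h.1} := by
  rw [← card_conj_mem, mul_comm, ← Nat.card_prod]
  exact Nat.card_congr <| (QuotientGroup.preimageMkEquivSubgroupProdSet H _).symm.trans <|
    Equiv.subtypeEquivRight fun g => mk_mem_fixedBy_iff H γ g

end FixedCosets

section CentralizerSize

/-- The order `∏_i i^{c_i} c_i!` of the centralizer of a permutation with `c_i` cycles of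
length `i`, the multiset `s` being that of its cycle lengths, fixed points included. -/
def centralizerSize (s : Multiset ℕ) : ℕ :=
  s.prod * ∏ i ∈ s.toFinset, (s.count i).factorial

lemma centralizerSize_eq_prod {s : Multiset ℕ} {t : Finset ℕ} (hst : s.toFinset ⊆ t) :
    centralizerSize s = ∏ i ∈ t, i ^ s.count i * (s.count i).factorial := by
  rw [centralizerSize, Finset.prod_mul_distrib, ← Finset.prod_multiset_count_of_subset s t hst]
  congr 1
  refine Finset.prod_subset hst fun i _ hi => ?_
  rw [Multiset.count_eq_zero.2 (Multiset.mem_toFinset.not.1 hi), Nat.factorial_zero]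

lemma centralizerSize_add {s t : Multiset ℕ} (hst : Disjoint s t) :
    centralizerSize (s + t) = centralizerSize s * centralizerSize t := by
  have count_left : ∀ i ∈ s.toFinset, ((s + t).count i).factorial = (s.count i).factorial :=
    fun i hi => by
      rw [Multiset.count_add, Multiset.count_eq_zero.2
        (Multiset.disjoint_left.1 hst (Multiset.mem_toFinset.1 hi)), add_zero]
  have count_right : ∀ i ∈ t.toFinset, ((s + t).count i).factorial = (t.count i).factorial :=
    fun i hi => by
      rw [Multiset.count_add, Multiset.count_eq_zero.2
        (Multiset.disjoint_right.1 hst (Multiset.mem_toFinset.1 hi)), zero_add]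
  rw [centralizerSize, Multiset.toFinset_add,
    Finset.prod_union (Multiset.disjoint_toFinset.2 hst), Finset.prod_congr rfl count_left,
    Finset.prod_congr rfl count_right, Multiset.prod_add, centralizerSize, centralizerSize,
    mul_mul_mul_comm]

lemma centralizerSize_replicate (k m : ℕ) :
    centralizerSize (Multiset.replicate k m) = m ^ k * k.factorial := by
  have subset : (Multiset.replicate k m).toFinset ⊆ {m} := fun i hi =>
    Finset.mem_singleton.2 (Multiset.eq_of_mem_replicate (Multiset.mem_toFinset.1 hi))
  rw [centralizerSize_eq_prod subset, Finset.prod_singleton, Multiset.count_replicate_self]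

lemma centralizerSize_ne_zero {s : Multiset ℕ} (hs : ∀ l ∈ s, 0 < l) : centralizerSize s ≠ 0 :=
  mul_ne_zero (Multiset.prod_ne_zero fun h => (hs 0 h).ne rfl)
    (Finset.prod_ne_zero_iff.2 fun _ _ => Nat.factorial_ne_zero _)

variable {α : Type*} [Fintype α] [DecidableEq α]

lemma nat_card_centralizer_eq_centralizerSize (σ : Equiv.Perm α) :
    Nat.card (Subgroup.centralizer {σ}) = centralizerSize σ.partition.parts := by
  have disjoint : Disjoint σ.cycleType
      (Multiset.replicate (Fintype.card α - σ.support.card) 1) :=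
    Multiset.disjoint_left.2 fun hi hi' => by
      have := Equiv.Perm.two_le_of_mem_cycleType hi
      have := Multiset.eq_of_mem_replicate hi'
      omega
  rw [Equiv.Perm.nat_card_centralizer, Equiv.Perm.parts_partition, centralizerSize_add disjoint,
    centralizerSize_replicate, one_pow, one_mul, centralizerSize, Equiv.Perm.sum_cycleType]
  ring

end CentralizerSize

section CycleIndexFormula

variable {α : Type*} [Fintype α] [DecidableEq α]

lemma eq_of_filter_two_le_parts_eq {n : ℕ} {μ ν : n.Partition}
    (h : μ.parts.filter (2 ≤ ·) = ν.parts.filter (2 ≤ ·)) : μ = ν := by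
  have decomposition (π : n.Partition) : π.parts = π.parts.filter (2 ≤ ·) +
      Multiset.replicate (n - (π.parts.filter (2 ≤ ·)).sum) 1 := by
    have ones : π.parts.filter (¬ 2 ≤ ·) =
        Multiset.replicate (π.parts.filter (¬ 2 ≤ ·)).card 1 :=
      Multiset.eq_replicate_card.2 fun l hl => by
        have := π.parts_pos (Multiset.mem_of_mem_filter hl)
        have := Multiset.of_mem_filter hl
        omega
    have sum_ones := congrArg Multiset.sum ones
    rw [Multiset.sum_replicate, smul_eq_mul, mul_one] at sum_ones
    have sum_parts := sum_filter_parts_add (2 ≤ ·) π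
    have card_ones : n - (π.parts.filter (2 ≤ ·)).sum = (π.parts.filter (¬ 2 ≤ ·)).card := by
      omega
    rw [card_ones, ← ones, Multiset.filter_add_not]
  rw [Nat.Partition.ext_iff, decomposition μ, decomposition ν, h]

lemma exists_partition_eq (μ : (Fintype.card α).Partition) :
    ∃ σ : Equiv.Perm α, σ.partition = μ := by
  have sum_le : (μ.parts.filter (2 ≤ ·)).sum ≤ Fintype.card α := by
    have := sum_filter_parts_add (2 ≤ ·) μ
    omega
  obtain ⟨σ, hσ⟩ := (Equiv.Perm.exists_with_cycleType_iff α).2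
    ⟨sum_le, fun _ hl => Multiset.of_mem_filter hl⟩
  exact ⟨σ, eq_of_filter_two_le_parts_eq
    (Equiv.Perm.filter_parts_partition_eq_cycleType.trans hσ)⟩

/-- A chosen permutation of cycle type `μ`, fixed points included. -/
noncomputable def permOfPartition (μ : (Fintype.card α).Partition) : Equiv.Perm α :=
  (exists_partition_eq μ).choose

lemma partition_permOfPartition (μ : (Fintype.card α).Partition) :
    (permOfPartition μ : Equiv.Perm α).partition = μ :=
  (exists_partition_eq μ).choose_spec

/-- The number `|Fix_X(μ)|` of points of `X = S_α / H` fixed by a permutation of cycle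
type `μ`. -/
noncomputable def fixedCosetCount (H : Subgroup (Equiv.Perm α))
    (μ : (Fintype.card α).Partition) : ℕ :=
  Nat.card (MulAction.fixedBy (Equiv.Perm α ⧸ H) (permOfPartition μ))

lemma fixedCosetCount_mul_card (H : Subgroup (Equiv.Perm α)) (μ : (Fintype.card α).Partition) :
    fixedCosetCount H μ * Nat.card H =
      centralizerSize μ.parts * Nat.card {h : H // h.1.partition = μ} := by
  rw [fixedCosetCount, card_fixedBy_quotient_mul_card, nat_card_centralizer_eq_centralizerSize]
  simp only [Equiv.Perm.partition_eq_of_isConj, partition_permOfPartition, eq_comm]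

theorem aeval_eq_sum_fixedCosetCount {K R : Type*} [Field K] [CharZero K] [CommRing R]
    [Nontrivial R] (H : Subgroup (Equiv.Perm α)) {f : Polynomial ℤ}
    (hf : toRatPowerSeries f * invariantHilbertSeries R (⊤ : Subgroup (Equiv.Perm α)) =
      invariantHilbertSeries R H) (ζ : K) :
    Polynomial.aeval ζ f = ∑ μ : (Fintype.card α).Partition,
      fixedCosetCount H μ * Polynomial.aeval ζ (molienQuotient μ) / centralizerSize μ.parts := by
  have : Fintype H := Fintype.ofFinite H
  have card_ne_zero : (Nat.card H : K) ≠ 0 := Nat.cast_ne_zero.2 Nat.card_pos.ne'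
  refine mul_left_cancel₀ card_ne_zero ?_
  have average := congrArg (Polynomial.aeval ζ) (card_mul_eq_sum_molienQuotient H hf)
  rw [map_mul, map_natCast, map_sum] at average
  rw [average, ← Finset.sum_fiberwise Finset.univ fun h : H => h.1.partition, Finset.mul_sum]
  refine Finset.sum_congr rfl fun μ _ => ?_
  have size_ne_zero : (centralizerSize μ.parts : K) ≠ 0 :=
    Nat.cast_ne_zero.2 (centralizerSize_ne_zero fun _ => μ.parts_pos)
  have count := congrArg (Nat.cast (R := K)) (fixedCosetCount_mul_card H μ)
  rw [Nat.cast_mul, Nat.cast_mul] at count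
  rw [Finset.sum_congr rfl fun h hh => by rw [(Finset.mem_filter.1 hh).2], Finset.sum_const,
    ← Fintype.card_subtype, ← Nat.card_eq_fintype_card, nsmul_eq_mul, mul_div_assoc', eq_div_iff
    size_ne_zero]
  linear_combination -Polynomial.aeval ζ (molienQuotient μ) * count

end CycleIndexFormula

section RectangularParts

variable {k m r n : ℕ}

lemma sub_one_div_eq_div (h : ¬ m ∣ n) : (n - 1) / m = n / m := by
  obtain ⟨j, rfl⟩ := Nat.exists_eq_add_one_of_ne_zero fun h0 : n = 0 => h (h0 ▸ dvd_zero m)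
  rw [Nat.add_sub_cancel, Nat.succ_div_of_not_dvd h]

lemma div_eq_of_mul_add_eq (hr : r < m) (hm : 0 < m) (hn : k * m + r = n) : n / m = k := by
  rw [← hn, mul_comm, Nat.mul_add_div hm, Nat.div_eq_of_lt hr, add_zero]

lemma not_dvd_of_mem_parts (hr : r < m) {L : r.Partition} {l : ℕ} (hl : l ∈ L.parts) : ¬ m ∣ l :=
  Nat.not_dvd_of_pos_of_lt (L.parts_pos hl) ((Nat.Partition.le_of_mem_parts hl).trans_lt hr)

lemma filter_dvd_parts_eq_replicate (hr : r < m) (hn : k * m + r = n) {μ : n.Partition}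
    (hμ : μ.parts.countP (m ∣ ·) = k) : μ.parts.filter (m ∣ ·) = Multiset.replicate k m := by
  rw [Multiset.countP_eq_card_filter] at hμ
  refine Multiset.eq_replicate.2 ⟨hμ, fun l hl => ?_⟩
  obtain ⟨rest, hrest⟩ := Multiset.exists_cons_of_mem hl
  have rest_le : rest.card * m ≤ rest.sum :=
    Multiset.card_nsmul_le_sum fun i hi =>
      le_of_mem_filter_dvd_parts (hrest ▸ Multiset.mem_cons_of_mem hi)
  have sum_le := sum_filter_parts_add (m ∣ ·) μ
  rw [hrest, Multiset.sum_cons] at sum_le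
  rw [hrest, Multiset.card_cons] at hμ
  rw [← hμ, add_one_mul] at hn
  have l_lt : l < m * 2 := by omega
  obtain ⟨c, rfl⟩ := Multiset.of_mem_filter hl
  have c_pos : 0 < c := Nat.pos_of_mul_pos_left (μ.parts_pos (Multiset.mem_of_mem_filter hl))
  have c_lt : c < 2 := Nat.lt_of_mul_lt_mul_left l_lt
  rw [show c = 1 by omega, mul_one]

/-- The partition `(m^k, λ)` of `n = k * m + r` with `k` parts equal to `m` together with the parts
of the partition `λ` of `r`. -/
def prependParts (hm : 0 < m) (hn : k * m + r = n) (L : r.Partition) : n.Partition where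
  parts := Multiset.replicate k m + L.parts
  parts_pos hi := (Multiset.mem_add.1 hi).elim
    (fun hi => hm.trans_eq (Multiset.eq_of_mem_replicate hi).symm) L.parts_pos
  parts_sum := by rw [Multiset.sum_add, Multiset.sum_replicate, L.parts_sum, smul_eq_mul, hn]

variable (hm : 0 < m) (hn : k * m + r = n)

lemma prependParts_injective : Function.Injective (prependParts hm hn) := fun _ _ h =>
  Nat.Partition.ext (add_left_cancel (congrArg Nat.Partition.parts h))

variable (hr : r < m)
include hr

lemma mem_range_prependParts {μ : n.Partition} (hμ : μ.parts.countP (m ∣ ·) = k) :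
    μ ∈ Set.range (prependParts hm hn) := by
  have filter_eq := filter_dvd_parts_eq_replicate hr hn hμ
  have sum_rest : (μ.parts.filter (¬ m ∣ ·)).sum = r := by
    have sum_parts := sum_filter_parts_add (m ∣ ·) μ
    rw [filter_eq, Multiset.sum_replicate, smul_eq_mul] at sum_parts
    omega
  refine ⟨⟨_, fun hl => μ.parts_pos (Multiset.mem_of_mem_filter hl), sum_rest⟩,
    Nat.Partition.ext ?_⟩
  exact (congrArg (· + _) filter_eq.symm).trans (Multiset.filter_add_not _ _)

lemma centralizerSize_prependParts (L : r.Partition) :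
    centralizerSize (prependParts hm hn L).parts =
      m ^ k * k.factorial * centralizerSize L.parts := by
  have disjoint : Disjoint (Multiset.replicate k m) L.parts :=
    Multiset.disjoint_left.2 fun hl hl' =>
      not_dvd_of_mem_parts hr hl' (Multiset.eq_of_mem_replicate hl).symm.dvd
  exact (centralizerSize_add disjoint).trans (by rw [centralizerSize_replicate])

lemma countP_dvd_parts_prependParts (L : r.Partition) :
    (prependParts hm hn L).parts.countP (m ∣ ·) = k := by
  rw [prependParts, Multiset.countP_add,
    Multiset.countP_eq_zero.2 fun _ hl => not_dvd_of_mem_parts hr hl, add_zero,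
    Multiset.countP_eq_card.2 fun l hl => (Multiset.eq_of_mem_replicate hl).symm.dvd,
    Multiset.card_replicate]

variable {K : Type*} [CommRing K] [IsDomain K] {ζ : K}

lemma aeval_molienQuotient_prependParts_mul (hζ : IsPrimitiveRoot ζ m) (L : r.Partition) :
    Polynomial.aeval ζ (molienQuotient (prependParts hm hn L)) *
        (L.parts.map fun l => 1 - ζ ^ l).prod =
      m ^ k * k.factorial * ∏ i ∈ Finset.range r, (1 - ζ ^ (i + 1)) := by
  have aeval_reducedFactor_self : Polynomial.aeval ζ (reducedFactor m m) = 1 := by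
    simpa only [mul_one, Nat.cast_one] using aeval_reducedFactor_mul hm hζ.pow_eq_one 1
  have aeval_prod_reducedFactor :
      Polynomial.aeval ζ ((prependParts hm hn L).parts.map (reducedFactor m)).prod =
        (L.parts.map fun l => 1 - ζ ^ l).prod := by
    rw [prependParts, Multiset.map_add, Multiset.prod_add, Multiset.map_replicate,
      Multiset.prod_replicate, map_mul, map_pow, aeval_reducedFactor_self, one_pow, one_mul,
      map_multiset_prod, Multiset.map_map]
    exact congrArg Multiset.prod (Multiset.map_congr rfl fun l hl =>
      aeval_reducedFactor_of_not_dvd (not_dvd_of_mem_parts hr hl))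
  have aeval_prod_range := prod_range_aeval_reducedFactor hm hζ k hr
  rw [mul_comm m, hn] at aeval_prod_range
  have evaluated := congrArg (Polynomial.aeval ζ)
    (prod_reducedFactor_mul_molienQuotient hm (prependParts hm hn L))
  rw [countP_dvd_parts_prependParts hm hn hr, div_eq_of_mul_add_eq hr hm hn, Nat.sub_self,
    pow_zero, one_mul, map_mul, aeval_prod_reducedFactor, map_prod, aeval_prod_range]
    at evaluated
  rw [mul_comm, evaluated]

end RectangularParts

section Evaluation

variable {K : Type*} {k m r : ℕ} {ζ : K}

lemma prod_Icc_eq_centralizerSize_mul_prod [CommRing K] (ζ : K) (L : r.Partition) :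
    ∏ i ∈ Finset.Icc 1 r, (((i : K) * (1 - ζ ^ i)) ^ L.parts.count i *
        ((L.parts.count i).factorial : K)) =
      centralizerSize L.parts * (L.parts.map fun l => 1 - ζ ^ l).prod := by
  have subset : L.parts.toFinset ⊆ Finset.Icc 1 r := fun i hi =>
    have hi := Multiset.mem_toFinset.1 hi
    Finset.mem_Icc.2 ⟨L.parts_pos hi, Nat.Partition.le_of_mem_parts hi⟩
  have prod_eq : (L.parts.map fun l => 1 - ζ ^ l).prod =
      ∏ i ∈ Finset.Icc 1 r, (1 - ζ ^ i) ^ L.parts.count i := by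
    rw [Finset.prod_multiset_map_count]
    refine Finset.prod_subset subset fun i _ hi => ?_
    rw [Multiset.count_eq_zero.2 (Multiset.mem_toFinset.not.1 hi), pow_zero]
  rw [centralizerSize_eq_prod subset, prod_eq, Nat.cast_prod, ← Finset.prod_mul_distrib]
  refine Finset.prod_congr rfl fun i _ => ?_
  rw [Nat.cast_mul, Nat.cast_pow, mul_pow]
  ring

lemma prod_map_one_sub_pow_ne_zero [CommRing K] [IsDomain K] (hζ : IsPrimitiveRoot ζ m)
    (hr : r < m) (L : r.Partition) : (L.parts.map fun l => 1 - ζ ^ l).prod ≠ 0 :=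
  Multiset.prod_ne_zero fun zero_mem => by
    obtain ⟨l, hl, eq_zero⟩ := Multiset.mem_map.1 zero_mem
    exact not_dvd_of_mem_parts hr hl (hζ.dvd_of_pow_eq_one l (sub_eq_zero.1 eq_zero).symm)

variable [Field K] [CharZero K] {α R : Type*} [Fintype α] [DecidableEq α] [CommRing R]
  [Nontrivial R]

theorem aeval_eq_prod_mul_sum_prependParts (H : Subgroup (Equiv.Perm α)) {f : Polynomial ℤ}
    (hf : toRatPowerSeries f * invariantHilbertSeries R (⊤ : Subgroup (Equiv.Perm α)) =
      invariantHilbertSeries R H) (hm : 0 < m) (hα : k * m + r = Fintype.card α) (hr : r < m)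
    (hζ : IsPrimitiveRoot ζ m) :
    Polynomial.aeval ζ f = (∏ i ∈ Finset.range r, (1 - ζ ^ (i + 1))) * ∑ L : r.Partition,
      (fixedCosetCount H (prependParts hm hα L) : K) /
        ∏ i ∈ Finset.Icc 1 r, (((i : K) * (1 - ζ ^ i)) ^ L.parts.count i *
          ((L.parts.count i).factorial : K)) := by
  rw [aeval_eq_sum_fixedCosetCount H hf, Finset.mul_sum]
  symm
  refine Fintype.sum_of_injective _ (prependParts_injective hm hα) _ _ (fun μ hμ => ?_)
    fun L => ?_
  · have countP_ne : μ.parts.countP (m ∣ ·) ≠ Fintype.card α / m := fun h =>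
      hμ (mem_range_prependParts hm hα hr (h.trans (div_eq_of_mul_add_eq hr hm hα)))
    rw [aeval_molienQuotient_eq_zero hm hζ countP_ne, mul_zero, zero_div]
  · have m_ne_zero : (m : K) ≠ 0 := Nat.cast_ne_zero.2 hm.ne'
    have factorial_ne_zero : (k.factorial : K) ≠ 0 := Nat.cast_ne_zero.2 k.factorial_ne_zero
    have size_ne_zero : (centralizerSize L.parts : K) ≠ 0 :=
      Nat.cast_ne_zero.2 (centralizerSize_ne_zero fun _ => L.parts_pos)
    have prod_ne_zero := prod_map_one_sub_pow_ne_zero hζ hr L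
    have quotient_mul := aeval_molienQuotient_prependParts_mul hm hα hr hζ L
    rw [prod_Icc_eq_centralizerSize_mul_prod, centralizerSize_prependParts hm hα hr, Nat.cast_mul,
      Nat.cast_mul, Nat.cast_pow]
    field_simp
    linear_combination -(fixedCosetCount H (prependParts hm hα L) : K) * quotient_mul

omit [CharZero K] in
lemma eq_of_aeval_qInt_mul_eq (hζ : IsPrimitiveRoot ζ m) (hr : r < m) (hr0 : 0 < r) {y S : K}
    (h : Polynomial.aeval ζ (qInt (k * m + r)) * y =
      (∏ i ∈ Finset.range r, (1 - ζ ^ (i + 1))) * S) :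
    y = (1 - ζ) * (∏ i ∈ Finset.Icc 1 (r - 1), (1 - ζ ^ i)) * S := by
  have aeval_qInt_mul : Polynomial.aeval ζ (qInt (k * m + r)) * (1 - ζ) = 1 - ζ ^ r := by
    simp only [qInt, map_sum, map_pow, Polynomial.aeval_X]
    rw [geom_sum_mul_neg, pow_add, mul_comm k m, pow_mul, hζ.pow_eq_one, one_pow, one_mul]
  have one_sub_ne_zero : 1 - ζ ^ r ≠ 0 :=
    sub_ne_zero.2 (hζ.pow_ne_one_of_pos_of_lt hr0.ne' hr).symm
  obtain ⟨r, rfl⟩ := Nat.exists_eq_add_one_of_ne_zero hr0.ne'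
  rw [Nat.add_sub_cancel, Finset.range_eq_Ico, Finset.prod_Ico_add' (fun i => 1 - ζ ^ i),
    ← Finset.Ico_add_one_right_eq_Icc] at *
  rw [zero_add, Finset.prod_Ico_succ_top (Nat.le_add_left 1 r)] at h
  refine mul_left_cancel₀ one_sub_ne_zero ?_
  linear_combination (1 - ζ) * h - y * aeval_qInt_mul

end Evaluation

theorem molien_evaluation_nondiv_general {α R K : Type*} [Fintype α] [DecidableEq α] [CommRing R]
    [Nontrivial R] [Field K] [CharZero K] {n : ℕ} (hα : Fintype.card α = n)
    (H : Subgroup (Equiv.Perm α)) {m : ℕ} (hm : 2 ≤ m) (hnm : ¬ m ∣ n) {ζ : K}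
    (hζ : IsPrimitiveRoot ζ m) {k : ℕ} (hk : k = (n - 1) / m) (F : (n - k * m).Partition → ℕ)
    (hF : ∀ (L : (n - k * m).Partition) (γ : Equiv.Perm α),
      γ.cycleType = Multiset.replicate k m + L.parts.filter (2 ≤ ·) →
      F L = Nat.card {x : Equiv.Perm α ⧸ H // γ • x = x})
    {Xp Yp : Polynomial ℤ}
    (hX : ((Xp.map (Int.castRingHom ℚ) : Polynomial ℚ) : PowerSeries ℚ) *
      invariantHilbertSeries R (⊤ : Subgroup (Equiv.Perm α)) = invariantHilbertSeries R H)
    (hY : Xp = qInt n * Yp) :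
    Polynomial.aeval ζ Yp =
      (1 - ζ) * (∏ i ∈ Finset.Icc 1 (n - 1 - k * m), (1 - ζ ^ i)) *
        ∑ L : (n - k * m).Partition, (F L : K) /
          ∏ i ∈ Finset.Icc 1 (n - k * m), (((i : K) * (1 - ζ ^ i)) ^ L.parts.count i *
            ((L.parts.count i).factorial : K)) := by
  obtain rfl : Fintype.card α = n := hα
  have hm0 : 0 < m := by omega
  have mod_pos := Nat.pos_of_ne_zero fun h => hnm (Nat.dvd_of_mod_eq_zero h)
  have k_eq_div : k = Fintype.card α / m := hk.trans (sub_one_div_eq_div hnm)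
  have mod_eq : Fintype.card α - k * m = Fintype.card α % m := by
    rw [k_eq_div, Nat.mod_def, mul_comm]
  have hr : Fintype.card α - k * m < m := mod_eq.trans_lt (Nat.mod_lt _ hm0)
  have card_eq : k * m + (Fintype.card α - k * m) = Fintype.card α :=
    Nat.add_sub_of_le (k_eq_div ▸ Nat.div_mul_le_self _ _)
  have F_eq (L) : F L = fixedCosetCount H (prependParts hm0 card_eq L) := by
    refine hF L _ ?_
    rw [← Equiv.Perm.filter_parts_partition_eq_cycleType, partition_permOfPartition, prependParts,
      Multiset.filter_add, Multiset.filter_eq_self.2 fun l hl =>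
        hm.trans_eq (Multiset.eq_of_mem_replicate hl).symm]
  rw [Nat.sub_right_comm]
  refine eq_of_aeval_qInt_mul_eq (k := k) hζ hr (mod_pos.trans_eq mod_eq.symm) ?_
  rw [card_eq, ← map_mul, ← hY]
  simp only [F_eq]
  exact aeval_eq_prod_mul_sum_prependParts H hX hm0 card_eq hr hζ

/-- **Molien evaluation, non-divisible case** (Proposition `moliencalc`(a)).  Here
`F L = |Fix_X(m^k, L)|` denotes the number of points of `X = S_n/H` fixed by any
permutation whose cycle type is the partition of `n` consisting of `k` parts equal to `m`
together with the parts of `L` (Mathlib's `cycleType` records only cycle lengths `≥ 2`,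
so that partition corresponds to `cycleType = replicate k m + filter (2 ≤ ·) L.parts`). -/
theorem molien_evaluation_nondiv
    (n : ℕ) (hn : 3 ≤ n) [NeZero n] (H : Subgroup (Equiv.Perm (ZMod n)))
    (hfree : ∀ x ∈ Subgroup.zpowers (cyc n), x ≠ 1 →
      ∀ g : Equiv.Perm (ZMod n) ⧸ H, x • g ≠ g)
    (m : ℕ) (hm : 2 ≤ m) (hnm : ¬ m ∣ n)
    (ζ : ℂ) (hζ : IsPrimitiveRoot ζ m)
    (k : ℕ) (hk : k = (n - 1) / m)
    (F : Nat.Partition (n - k * m) → ℕ)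
    (hF : ∀ L : Nat.Partition (n - k * m), ∀ γ : Equiv.Perm (ZMod n),
      γ.cycleType = Multiset.replicate k m + Multiset.filter (fun i => 2 ≤ i) L.parts →
      (F L : ℕ) = Nat.card {x : Equiv.Perm (ZMod n) ⧸ H // γ • x = x})
    (Xp Yp : Polynomial ℤ)
    (hX : ((Xp.map (Int.castRingHom ℚ) : Polynomial ℚ) : PowerSeries ℚ) * hilbertSeries n ⊤ =
      hilbertSeries n H)
    (hY : Xp = qInt n * Yp) :
    Polynomial.aeval ζ Yp =
      (1 - ζ) * (∏ i ∈ Finset.Icc 1 (n - 1 - k * m), (1 - ζ ^ i)) *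
        ∑ L : Nat.Partition (n - k * m),
          (F L : ℂ) /
            ∏ i ∈ Finset.Icc 1 (n - k * m),
              (((i : ℂ) * (1 - ζ ^ i)) ^ (L.parts.count i) *
                (Nat.factorial (L.parts.count i) : ℂ)) :=
  molien_evaluation_nondiv_general (ZMod.card n) H hm hnm hζ hk F hF hX hY
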